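/- arXiv:2405.18534 — 4 statements merged into one kernel-verified Lean document; each statement's English description precedes it below -/
import Mathlib

section
/- Let ε₀ > 0 and Δ > 0, and let A be an adaptive selector whose candidate sets and scoring functions satisfy the Monotonicity assumption and the Bounded realized sensitivity assumption with bound Δ. Then the mechanism Repeated-EM_{ε₀,A} is ε₀-add-DP. -/
open scoped ENNReal

noncomputable section

/-- A mechanism `M` is `ε`-add-DP: for every dataset `D` and element `x`,
with `D ∪ {x}` and `D` as the neighboring pair, the probability of every outcome
set under `M (D ∪ {x})` is at most `e^ε` times that under `M D`. -/
def AddDP {X : Type*} {O : Type*} (M : Multiset X → PMF O) (ε : ℝ) : Prop :=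
  ∀ (D : Multiset X) (x : X) (S : Set O),
    (M (x ::ₘ D)).toOuterMeasure S ≤ ENNReal.ofReal (Real.exp ε) * (M D).toOuterMeasure S

/-- A mechanism `M` is (two-sided) `ε`-DP with respect to add-remove neighbors. -/
def PureDP {X : Type*} {O : Type*} (M : Multiset X → PMF O) (ε : ℝ) : Prop :=
  ∀ (D : Multiset X) (x : X) (S : Set O),
    (M (x ::ₘ D)).toOuterMeasure S ≤ ENNReal.ofReal (Real.exp ε) * (M D).toOuterMeasure S ∧
    (M D).toOuterMeasure S ≤ ENNReal.ofReal (Real.exp ε) * (M (x ::ₘ D)).toOuterMeasure S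

open Classical in
/-- The exponential mechanism over a finite nonempty candidate set `Cs`, outputting each
`c ∈ Cs` with probability proportional to `exp (lam * q c)`. -/
def expMech {C : Type*} (lam : ℝ) (Cs : Finset C) (hCs : Cs.Nonempty) (q : C → ℝ) : PMF C :=
  PMF.ofFinset
    (fun c => if c ∈ Cs then ENNReal.ofReal (Real.exp (lam * q c)) /
        (∑ c' ∈ Cs, ENNReal.ofReal (Real.exp (lam * q c'))) else 0)
    Cs
    (by
      obtain ⟨c₀, hc₀⟩ := hCs
      set Z : ℝ≥0∞ := ∑ c' ∈ Cs, ENNReal.ofReal (Real.exp (lam * q c')) with hZ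
      have hZ0 : Z ≠ 0 := by
        intro h
        have h0 := (Finset.sum_eq_zero_iff.mp h) c₀ hc₀
        rw [ENNReal.ofReal_eq_zero] at h0
        exact absurd h0 (not_le.mpr (Real.exp_pos _))
      have hZtop : Z ≠ ⊤ := by
        rw [hZ]
        exact (ENNReal.sum_lt_top.mpr (fun c _ => ENNReal.ofReal_lt_top)).ne
      calc (∑ c ∈ Cs, if c ∈ Cs then ENNReal.ofReal (Real.exp (lam * q c)) / Z else 0)
          = ∑ c ∈ Cs, ENNReal.ofReal (Real.exp (lam * q c)) / Z :=
            Finset.sum_congr rfl (fun c hc => if_pos hc)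
        _ = Z * Z⁻¹ := by
            rw [hZ]
            simp only [div_eq_mul_inv, ← Finset.sum_mul]
        _ = 1 := ENNReal.mul_inv_cancel hZ0 hZtop)
    (fun c hc => if_neg hc)

/-- The `Repeated-EM` mechanism: starting from the history `hist`, in each of the remaining
`L` rounds the adaptive selector `A` chooses a (nonempty) candidate set and a scoring function
from the history, and the next output is sampled from the exponential mechanism with
parameter `lam` on the current dataset's scores. -/
def repeatedEM {X C : Type*} (lam : ℝ) (A : List C → Finset C × (C → Multiset X → ℝ))
    (hA : ∀ h, (A h).1.Nonempty) : ℕ → Multiset X → List C → PMF (List C)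
  | 0, _, hist => PMF.pure hist
  | (L + 1), D, hist =>
      (expMech lam (A hist).1 (hA hist) (fun c => (A hist).2 c D)).bind
        (fun c => repeatedEM lam A hA L D (hist ++ [c]))

/-- Monotonicity assumption: for every history and candidate, adding an element to the
dataset does not decrease the score. -/
def EMMonotone {X C : Type*} (A : List C → Finset C × (C → Multiset X → ℝ)) : Prop :=
  ∀ (h : List C) (c : C) (x : X) (D : Multiset X), (A h).2 c D ≤ (A h).2 c (x ::ₘ D)

/-- Bounded realized sensitivity assumption: for every pair of add-remove neighboring
datasets and every possible output sequence, the realized score differences sum to at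
most `Δ`. -/
def EMBoundedSens {X C : Type*} (A : List C → Finset C × (C → Multiset X → ℝ))
    (Δ : ℝ) (L : ℕ) : Prop :=
  ∀ (D : Multiset X) (x : X) (out : Fin L → C),
    (∀ i : Fin L, out i ∈ (A ((List.ofFn out).take i.val)).1) →
    ∑ i : Fin L,
      |(A ((List.ofFn out).take i.val)).2 (out i) (x ::ₘ D) -
        (A ((List.ofFn out).take i.val)).2 (out i) D| ≤ Δ

/-- Recursive budget predicate. -/
def EMBudget {X C : Type*} (A : List C → Finset C × (C → Multiset X → ℝ))
    (D : Multiset X) (x : X) : ℕ → List C → ℝ → Prop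
  | 0, _, B => 0 ≤ B
  | (L + 1), h, B => ∀ c ∈ (A h).1,
      EMBudget A D x L (h ++ [c]) (B - |(A h).2 c (x ::ₘ D) - (A h).2 c D|)

theorem EMBudget_of_sum {X C : Type*} (A : List C → Finset C × (C → Multiset X → ℝ))
    (D : Multiset X) (x : X) (L : ℕ) : ∀ (h : List C) (B : ℝ),
    (∀ out : Fin L → C, (∀ i : Fin L, out i ∈ (A (h ++ (List.ofFn out).take i.val)).1) →
      ∑ i : Fin L,
      |(A (h ++ (List.ofFn out).take i.val)).2 (out i) (x ::ₘ D) -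
        (A (h ++ (List.ofFn out).take i.val)).2 (out i) D| ≤ B) →
    EMBudget A D x L h B := by
  induction L with
  | zero =>
    intro h B H
    simpa [EMBudget] using H Fin.elim0 (fun i => i.elim0)
  | succ L ih =>
    intro h B H c hc
    apply ih
    intro out hout
    have h1 := H (Fin.cons c out) (by
      intro i
      refine Fin.cases ?_ (fun j => ?_) i
      · simpa using hc
      · simpa [List.ofFn_succ] using hout j)
    rw [Fin.sum_univ_succ] at h1
    simp [List.ofFn_succ] at h1
    simp only [List.append_assoc, List.singleton_append]
    linarith

theorem expMech_le {C : Type*} (lam : ℝ) (hlam : 0 ≤ lam) (Cs : Finset C) (hCs : Cs.Nonempty)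
    (q q' : C → ℝ) (hq : ∀ c, q c ≤ q' c) (c : C) :
    expMech lam Cs hCs q' c ≤
      ENNReal.ofReal (Real.exp (lam * |q' c - q c|)) * expMech lam Cs hCs q c := by
  unfold expMech
  rw [PMF.ofFinset_apply, PMF.ofFinset_apply]
  split_ifs with hc
  · rw [← mul_div_assoc, ← ENNReal.ofReal_mul (Real.exp_pos _).le, ← Real.exp_add]
    apply ENNReal.div_le_div
    · apply ENNReal.ofReal_le_ofReal
      apply Real.exp_le_exp.mpr
      rw [← mul_add]
      apply mul_le_mul_of_nonneg_left _ hlam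
      linarith [le_abs_self (q' c - q c)]
    · apply Finset.sum_le_sum
      intro i _
      apply ENNReal.ofReal_le_ofReal
      apply Real.exp_le_exp.mpr
      exact mul_le_mul_of_nonneg_left (hq i) hlam
  · simp

theorem expMech_notMem {C : Type*} (lam : ℝ) (Cs : Finset C) (hCs : Cs.Nonempty)
    (q : C → ℝ) (c : C) (hc : c ∉ Cs) : expMech lam Cs hCs q c = 0 := by
  unfold expMech
  rw [PMF.ofFinset_apply, if_neg hc]

theorem repeatedEM_le {X C : Type*} (lam : ℝ) (hlam : 0 ≤ lam)
    (A : List C → Finset C × (C → Multiset X → ℝ)) (hA : ∀ h, (A h).1.Nonempty)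
    (hmono : EMMonotone A) (D : Multiset X) (x : X) (S : Set (List C)) (L : ℕ) :
    ∀ (h : List C) (B : ℝ), EMBudget A D x L h B →
    (repeatedEM lam A hA L (x ::ₘ D) h).toOuterMeasure S ≤
      ENNReal.ofReal (Real.exp (lam * B)) * (repeatedEM lam A hA L D h).toOuterMeasure S := by
  induction L with
  | zero =>
    intro h B hB
    simp only [repeatedEM]
    apply le_mul_of_one_le_left (zero_le)
    rw [ENNReal.one_le_ofReal]
    exact Real.one_le_exp (mul_nonneg hlam hB)
  | succ L ih =>
    intro h B hB
    simp only [repeatedEM, PMF.toOuterMeasure_bind_apply]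
    rw [← ENNReal.tsum_mul_left]
    apply ENNReal.tsum_le_tsum
    intro c
    by_cases hc : c ∈ (A h).1
    · refine (mul_le_mul' (expMech_le lam hlam _ (hA h) (fun c => (A h).2 c D) _
        (fun c => hmono h c x D) c) (ih _ _ (hB c hc))).trans (le_of_eq ?_)
      have : Real.exp (lam * B) = Real.exp (lam * |(A h).2 c (x ::ₘ D) - (A h).2 c D|) *
          Real.exp (lam * (B - |(A h).2 c (x ::ₘ D) - (A h).2 c D|)) := by
        rw [← Real.exp_add]; congr 1; ring
      rw [this, ENNReal.ofReal_mul (Real.exp_pos _).le]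
      ring
    · simp [expMech_notMem _ _ _ _ _ hc]

/-- under monotonicity and bounded realized sensitivity (with bound `Δ`),
`Repeated-EM` with exponential-mechanism parameter `ε₀ / Δ` is `ε₀`-add-DP. -/
theorem stmt2 {X C : Type*} (ε₀ Δ : ℝ) (hε₀ : 0 < ε₀) (hΔ : 0 < Δ) (L : ℕ)
    (A : List C → Finset C × (C → Multiset X → ℝ)) (hA : ∀ h, (A h).1.Nonempty)
    (hmono : EMMonotone A) (hsens : EMBoundedSens A Δ L) :
    AddDP (fun D => repeatedEM (ε₀ / Δ) A hA L D []) ε₀ := by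
  intro D x S
  have h := repeatedEM_le (ε₀ / Δ) (div_pos hε₀ hΔ).le A hA hmono D x S L [] Δ
    (EMBudget_of_sum A D x L [] Δ (by simpa using hsens D x))
  rwa [div_mul_cancel₀ _ hΔ.ne'] at h
end
end

section
/- There exists k₀ ∈ ℕ such that for all k, T ∈ ℕ with k, T ≥ k₀ and T ≥ k, all ε ∈ (0,1), and all finite alphabets 𝒴 with |𝒴| ≥ 5, setting τ*(k) = 0.001·k·log(|𝒴|·T/k), no ε-DP shifting heavy hitters algorithm can, on every input satisfying the contribution assumption with threshold τ*(k) and bound k, achieve error 2·τ*(k) with probability at least 0.5; that is, there is an input satisfying the assumption on which with probability more than 0.5 either some reported element y at some time t has w_t(y) = 0, or some y with w_t(y) ≥ 2·τ*(k) is not reported at time t. -/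
open scoped ENNReal

noncomputable section

/-- `hhWeight D t y` is `w_t(y)`: the number of users (streams) in `D` whose value at
time `t` is `y`. -/
def hhWeight {T : ℕ} {Y : Type*} [DecidableEq Y] (D : Multiset (Fin T → Y))
    (t : Fin T) (y : Y) : ℕ :=
  Multiset.card (D.filter fun s => s t = y)

/-- Contribution assumption with threshold `τ` and bound `k`: every user contributes to
at most `k` `τ`-heavy hitters, i.e. `|{t : w_t(x_{i,t}) > τ}| ≤ k` for each user `i`. -/
def ContribAssump {T : ℕ} {Y : Type*} [DecidableEq Y] (D : Multiset (Fin T → Y))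
    (τ : ℝ) (k : ℕ) : Prop :=
  ∀ s ∈ D, (Finset.univ.filter fun t : Fin T => τ < (hhWeight D t (s t) : ℝ)).card ≤ k

namespace HH

lemma group_dp {X O : Type*} (M : Multiset X → PMF O) (ε : ℝ) (h : PureDP M ε) (D : Multiset X)
    (S : Set O) : (M D).toOuterMeasure S ≤
      ENNReal.ofReal (Real.exp ε) ^ (Multiset.card D) * (M 0).toOuterMeasure S := by
  induction D using Multiset.induction with
  | empty => simp
  | cons x D ih =>
    refine ((h D x S).1).trans ?_
    rw [Multiset.card_cons, pow_succ', mul_assoc]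
    gcongr

lemma sum_disj {O ι : Type*} [Fintype ι] (P : PMF O) (G : ι → Set O)
    (hG : ∀ i j, i ≠ j → Disjoint (G i) (G j)) : ∑ i, P.toOuterMeasure (G i) ≤ 1 := by
  let _ : MeasurableSpace O := ⊤
  have : ∀ i, P.toOuterMeasure (G i) = P.toMeasure (G i) := fun i =>
    (P.toMeasure_apply_eq_toOuterMeasure (G i)).symm
  simp_rw [this]
  rw [← tsum_fintype (L := SummationFilter.unconditional ι),
    ← MeasureTheory.measure_iUnion (fun i j hij => hG i j hij)
      (fun _ => MeasurableSpace.measurableSet_top)]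
  exact MeasureTheory.prob_le_one

variable {T k q : ℕ} {Y : Type} {H : Type}

def pat (T : ℕ) (p : Fin k → Fin q × H) (t : Fin T) : Option H :=
  if h : t.val / q < k then
    if (p ⟨t.val / q, h⟩).1.val = t.val % q then some (p ⟨t.val / q, h⟩).2 else none
  else none

lemma pat_inj (hq : k * q ≤ T) (p p' : Fin k → Fin q × H)
    (h : ∀ t y, pat T p t = some y → pat T p' t = some y) : p = p' := by
  funext i
  have hj := (p i).1.2
  have hq0 : 0 < q := by omega
  have hlt : i.val * q + (p i).1.val < T := by
    have : (i.val + 1) * q ≤ k * q := Nat.mul_le_mul_right _ i.2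
    have : (i.val + 1) * q = i.val * q + q := by ring
    omega
  have hd : (i.val * q + (p i).1.val) / q = i.val := by
    rw [mul_comm, Nat.mul_add_div hq0, Nat.div_eq_of_lt hj, add_zero]
  have hm : (i.val * q + (p i).1.val) % q = (p i).1.val := by
    rw [mul_comm, Nat.mul_add_mod, Nat.mod_eq_of_lt hj]
  have key := h ⟨_, hlt⟩ (p i).2 (by simp [pat, hd, hm])
  simp only [pat, hd, hm, i.2, dite_true, Fin.eta] at key
  split_ifs at key with h1
  simp only [Option.some.injEq] at key
  exact Prod.ext (Fin.ext h1.symm) key.symm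

lemma pat_card (p : Fin k → Fin q × H) :
    (Finset.univ.filter fun t : Fin T => pat T p t ≠ none).card ≤ k := by
  have := Finset.card_le_card_of_injOn (s := Finset.univ.filter fun t : Fin T => pat T p t ≠ none)
    (t := Finset.range k) (fun t => t.val / q) ?_ ?_
  · simpa using this
  · intro t ht
    have ht := (Finset.mem_filter.1 (Finset.mem_coe.1 ht)).2
    simp only [pat] at ht
    split_ifs at ht <;> simp_all
  · intro t ht t' ht' he
    have aux : ∀ t : Fin T, pat T p t ≠ none →
        ∃ h : t.val / q < k, (p ⟨t.val / q, h⟩).1.val = t.val % q := by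
      intro t ht
      simp only [pat] at ht
      split_ifs at ht <;> simp_all
    simp only [Finset.coe_filter, Finset.mem_univ, true_and, Set.mem_ofPred_eq] at ht ht' he
    obtain ⟨h1, h2⟩ := aux t ht
    obtain ⟨h3, h4⟩ := aux t' ht'
    have : t.val % q = t'.val % q := by rw [← h2, ← h4]; simp only [he]
    apply Fin.ext
    rw [← Nat.div_add_mod t.val q, ← Nat.div_add_mod t'.val q, he, this]

def strm (g : Fin T → Option H) (v : H → Y) (a : Y) (t : Fin T) : Y := ((g t).map v).getD a

def dat (r : ℕ) (g : Fin T → Option H) (v : H → Y) (a b c : Y) : Multiset (Fin T → Y) :=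
  Multiset.replicate r (strm g v a) + Multiset.replicate r (strm g v b) +
    Multiset.replicate r (strm g v c)

lemma wt [DecidableEq Y] (r : ℕ) (g : Fin T → Option H) (v : H → Y) (a b c : Y) (t : Fin T) (y : Y) :
    hhWeight (dat r g v a b c) t y = (if strm g v a t = y then r else 0) +
      (if strm g v b t = y then r else 0) + (if strm g v c t = y then r else 0) := by
  have aux : ∀ s : Fin T → Y, Multiset.card ((Multiset.replicate r s).filter fun s => s t = y) =
      if s t = y then r else 0 := by
    intro s
    split_ifs with h
    · rw [Multiset.filter_eq_self.2]
      · simp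
      · intro x hx; rw [Multiset.eq_of_mem_replicate hx]; exact h
    · rw [Multiset.filter_eq_nil.2]
      · simp
      · intro x hx; rw [Multiset.eq_of_mem_replicate hx]; exact h
  simp [hhWeight, dat, Multiset.filter_add, aux]

end HH

open HH in
theorem stmt11 :
    ∃ k₀ : ℕ, ∀ (k T : ℕ), k₀ ≤ k → k₀ ≤ T → k ≤ T →
      ∀ ε : ℝ, 0 < ε → ε < 1 →
      ∀ (Y : Type) [Fintype Y] [DecidableEq Y], 5 ≤ Fintype.card Y →
      ∀ M : Multiset (Fin T → Y) → PMF (Fin T → Finset Y), PureDP M ε →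
      ∃ D : Multiset (Fin T → Y),
        ContribAssump D (0.001 * k * Real.log (Fintype.card Y * T / k)) k ∧
        (M D).toOuterMeasure
            {R : Fin T → Finset Y | ∀ t : Fin T,
              (∀ y ∈ R t, 0 < hhWeight D t y) ∧
              (∀ y : Y,
                2 * (0.001 * k * Real.log (Fintype.card Y * T / k)) ≤
                  (hhWeight D t y : ℝ) → y ∈ R t)} < 1 / 2 := by
  refine ⟨4000, ?_⟩
  intro k T hk hT hkT ε hε0 hε1 Y _ _ hY M hM
  obtain ⟨A, -, hA⟩ := Finset.exists_subset_card_eq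
    (s := (Finset.univ : Finset Y)) (n := 3) (by rw [Finset.card_univ]; omega)
  obtain ⟨a, b, c, hab, hac, hbc, hAe⟩ := Finset.card_eq_three.1 hA
  set H := {y : Y // y ∉ A} with hH
  have hHc : Fintype.card H = Fintype.card Y - 3 := by
    have h := Fintype.card_subtype_compl (fun y : Y => y ∈ A)
    rw [Fintype.card_coe, hA] at h
    exact h
  set q := T / k with hq
  set τ : ℝ := 0.001 * k * Real.log (Fintype.card Y * T / k) with hτ
  set r := ⌈2 * τ / 3⌉₊ with hr
  have hk0 : 0 < k := by omega
  have hkR : (4000:ℝ) ≤ k := by exact_mod_cast hk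
  have hYR : (5:ℝ) ≤ Fintype.card Y := by exact_mod_cast hY
  have hkTR : (k:ℝ) ≤ T := by exact_mod_cast hkT
  set x : ℝ := Fintype.card Y * T / k with hx
  have hx5 : 5 ≤ x := by
    rw [hx, le_div_iff₀ (by linarith)]
    nlinarith
  have hlog1 : 1 ≤ Real.log x := by
    rw [Real.le_log_iff_exp_le (by linarith)]
    linarith [Real.exp_one_lt_d9]
  have hτ4 : 4 ≤ τ := by rw [hτ]; nlinarith
  have hr1 : 2 * τ ≤ 3 * r := by have := Nat.le_ceil (2 * τ / 3); rw [← hr] at this; linarith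
  have hr2 : (r:ℝ) < 2 * τ / 3 + 1 := Nat.ceil_lt_add_one (by linarith)
  have hrτ : (r:ℝ) ≤ τ := by linarith
  -- numeric bound
  have hq1 : 1 ≤ q := Nat.one_le_div_iff hk0 |>.2 hkT
  have hkq : k * q ≤ T := Nat.mul_div_le T k
  set z : ℝ := (q:ℝ) * (Fintype.card H : ℝ) with hz
  have hq1R : (1:ℝ) ≤ q := by exact_mod_cast hq1
  have hHR : (Fintype.card H : ℝ) = Fintype.card Y - 3 := by
    rw [hHc, Nat.cast_sub (by omega)]; norm_num
  have hz2 : 2 ≤ z := by rw [hz, hHR]; nlinarith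
  have hzx : x ≤ 5 * z := by
    have h1 : (T:ℝ) / k ≤ 2 * q := by
      rw [div_le_iff₀ (by linarith)]
      have : T ≤ 2 * q * k := by
        have := Nat.div_add_mod T k
        have := Nat.mod_lt T hk0
        rw [← hq] at *
        nlinarith
      exact_mod_cast this
    have h2 : (Fintype.card Y : ℝ) ≤ 5 / 2 * Fintype.card H := by rw [hHR]; linarith
    calc x = Fintype.card Y * ((T:ℝ) / k) := by rw [hx]; ring
      _ ≤ (5 / 2 * Fintype.card H) * (2 * q) := by gcongr
      _ = 5 * z := by rw [hz]; ring
  have hxz : x ≤ z ^ 4 := by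
    have h3 : (8:ℝ) ≤ z ^ 3 := by
      calc (8:ℝ) = 2 ^ 3 := by norm_num
        _ ≤ _ := by gcongr
    nlinarith
  have hlz : Real.log x ≤ 4 * Real.log z := by
    have := Real.log_le_log (by linarith) hxz
    rw [Real.log_pow] at this; exact_mod_cast this
  have hnum : 2 * Real.exp 1 ^ (3 * r) < z ^ k := by
    rw [← Real.exp_nat_mul, ← Real.exp_log (show (0:ℝ) < 2 by norm_num), ← Real.exp_add,
      ← Real.exp_log (show 0 < z by linarith), ← Real.exp_nat_mul, Real.exp_lt_exp]
    have := Real.log_two_lt_d9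
    push_cast
    have h5 : (k:ℝ) * Real.log x ≤ k * (4 * Real.log z) := by gcongr
    have h6 : τ = 0.001 * (k * Real.log x) := by rw [hτ]; ring
    nlinarith
  -- datasets
  let D : (Fin k → Fin q × H) → Multiset (Fin T → Y) := fun p =>
    dat r (pat T p) Subtype.val a b c
  have hDc : ∀ p, Multiset.card (D p) = 3 * r := by
    intro p; simp [D, dat]; ring
  by_contra hcon
  push Not at hcon
  have hassump : ∀ p, ContribAssump (D p) τ k := by
    intro p s hs
    refine le_trans (Finset.card_le_card ?_) (pat_card (T := T) p)
    intro t ht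
    simp only [Finset.mem_filter, Finset.mem_univ, true_and] at ht ⊢
    intro hn
    apply absurd ht
    rw [not_lt]
    refine le_trans ?_ hrτ
    have hs' : s t = a ∨ s t = b ∨ s t = c := by
      simp only [D, dat, Multiset.mem_add] at hs
      rcases hs with (hs | hs) | hs <;> rw [Multiset.eq_of_mem_replicate hs] <;> simp [strm, hn]
    norm_cast
    simp only [D, wt, strm, hn]
    rcases hs' with h | h | h <;> simp [h, hab, hac, hbc, hab.symm, hac.symm, hbc.symm]
  let G : (Fin k → Fin q × H) → Set (Fin T → Finset Y) := fun p =>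
    {R | ∀ t : Fin T, (∀ y ∈ R t, 0 < hhWeight (D p) t y) ∧
              (∀ y : Y, 2 * τ ≤ (hhWeight (D p) t y : ℝ) → y ∈ R t)}
  have hdisj : ∀ p p', p ≠ p' → Disjoint (G p) (G p') := by
    intro p p' hne
    rw [Set.disjoint_left]
    intro R hR hR'
    apply hne
    apply pat_inj hkq
    intro t y hy
    have h1 : y.val ∈ R t := by
      apply (hR t).2
      simp only [D, wt, strm, hy]
      simp
      linarith
    have h2 := (hR' t).1 _ h1
    simp only [D, wt, strm] at h2
    have hyA := y.2
    simp only [hAe, Finset.mem_insert, Finset.mem_singleton, not_or] at hyA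
    cases hp : pat T p' t with
    | none => 
      simp only [hp] at h2
      simp [Ne.symm hyA.1, Ne.symm hyA.2.1, Ne.symm hyA.2.2] at h2
    | some y' =>
      simp only [hp] at h2
      by_cases he : y'.val = y.val
      · rw [Subtype.ext he]
      · simp [he] at h2
  have hsum := sum_disj (M 0) G hdisj
  set E : ℝ≥0∞ := ENNReal.ofReal (Real.exp 1) ^ (3 * r) with hE
  have hlow : ∀ p, 1 / 2 ≤ E * (M 0).toOuterMeasure (G p) := by
    intro p
    refine (hcon (D p) (hassump p)).trans ((group_dp M ε hM (D p) (G p)).trans ?_)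
    rw [hDc, hE]
    gcongr
  have hcard : ((Fintype.card (Fin k → Fin q × H) : ℕ) : ℝ) = z ^ k := by
    simp [hz]
  have h7 : (Fintype.card (Fin k → Fin q × H) : ℝ≥0∞) * (1 / 2) ≤ E := by
    calc (Fintype.card (Fin k → Fin q × H) : ℝ≥0∞) * (1 / 2)
        = ∑ p : Fin k → Fin q × H, (1 / 2 : ℝ≥0∞) := by
          rw [Finset.sum_const, Finset.card_univ, nsmul_eq_mul]
      _ ≤ ∑ p, E * (M 0).toOuterMeasure (G p) := Finset.sum_le_sum fun p _ => hlow p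
      _ = E * ∑ p, (M 0).toOuterMeasure (G p) := by rw [Finset.mul_sum]
      _ ≤ E * 1 := by gcongr
      _ = E := mul_one E
  have h8 := ENNReal.toReal_mono (by rw [hE]; exact ENNReal.pow_ne_top ENNReal.ofReal_ne_top) h7
  rw [ENNReal.toReal_mul, ENNReal.toReal_natCast, hcard, hE, ENNReal.toReal_pow,
    ENNReal.toReal_ofReal (Real.exp_pos 1).le] at h8
  have h9 : ((1 / 2 : ℝ≥0∞)).toReal = 1 / 2 := by simp
  rw [h9] at h8
  linarith
end
end

section
/- For every ε₀ > 0, every L ∈ ℕ, and every ε' < L·ε₀, there exists an adaptive selector A satisfying the Monotonicity assumption and the Bounded realized sensitivity assumption with Δ = 1 such that the mechanism Repeated-EM_{ε₀,A} is not ε'-DP. -/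
open scoped ENNReal

noncomputable section

open Classical in
/-- the selector -/
def badSel (s : ℝ) (h : List ℕ) : Finset ℕ × (ℕ → Multiset ℕ → ℝ) :=
  ({0, 1}, fun c D => if c = 0 then s else if (D ≠ 0 ∧ ∀ a ∈ h, a = 0) then 1 else 0)

lemma badSel_mono (s : ℝ) : EMMonotone (badSel s) := by
  intro h c x D
  simp only [badSel]
  by_cases hc : c = 0
  · simp [hc]
  · by_cases hh : ∀ a ∈ h, a = 0
    · by_cases hD : D = 0
      · simp only [hD, hc, if_false, ne_eq, not_true_eq_false, false_and]
        split_ifs <;> norm_num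
      · simp [hc, hD]
    · simp [hc, hh]

lemma badSel_sens (s : ℝ) (L : ℕ) : EMBoundedSens (badSel s) 1 L := by
  classical
  intro D x out _
  let P : Fin L → Prop := fun i => out i ≠ 0 ∧ ∀ a ∈ (List.ofFn out).take i.val, a = 0
  have key : ∀ i j : Fin L, P i → P j → ¬ i < j := by
    intro i j hi hj hij
    refine hi.1 (hj.2 _ ?_)
    rw [List.mem_take_iff_getElem]
    refine ⟨i.val, ?_, ?_⟩
    · simp only [List.length_ofFn, lt_min_iff]
      exact ⟨hij, i.2⟩
    · simp
  calc _ ≤ ∑ i : Fin L, (if P i then (1 : ℝ) else 0) := by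
        refine Finset.sum_le_sum fun i _ => ?_
        by_cases hc : out i = 0
        · simp [badSel, P, hc]
        · by_cases hh : ∀ a ∈ (List.ofFn out).take i.val, a = 0
          · have hP : P i := ⟨hc, hh⟩
            rw [if_pos hP]
            simp only [badSel, if_neg hc]
            by_cases hD : D = 0
            · subst hD
              simp only [ne_eq, Multiset.cons_ne_zero, not_false_eq_true, true_and, hh,
                not_true_eq_false, false_and, if_false]
              split_ifs <;> simp
            · simp [hD]
          · simp only [badSel, if_neg hc, hh, and_false, if_false, sub_self, abs_zero]
            split_ifs <;> simp
    _ ≤ 1 := by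
        rw [Finset.sum_boole]
        have : (Finset.univ.filter P).card ≤ 1 := by
          rw [Finset.card_le_one]
          intro i hi j hj
          simp only [Finset.mem_filter, Finset.mem_univ, true_and] at hi hj
          exact le_antisymm (not_lt.1 (key j i hj hi)) (not_lt.1 (key i j hi hj))
        exact_mod_cast this

lemma repeatedEM_prefix {X C : Type*} (lam : ℝ) (A : List C → Finset C × (C → Multiset X → ℝ))
    (hA : ∀ h, (A h).1.Nonempty) (D : Multiset X) (L : ℕ) :
    ∀ (h out : List C), repeatedEM lam A hA L D h out ≠ 0 → h <+: out := by
  induction L with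
  | zero =>
    intro h out hne
    simp only [repeatedEM, PMF.pure_apply, ne_eq, ite_eq_right_iff, one_ne_zero, imp_false,
      not_not] at hne
    rw [hne]
  | succ n ih =>
    intro h out hne
    rw [repeatedEM, PMF.bind_apply] at hne
    by_contra hcon
    apply hne
    rw [ENNReal.tsum_eq_zero]
    intro c
    by_contra h2
    have h3 := ih _ _ (right_ne_zero_of_mul h2)
    exact hcon ((List.prefix_append h [c]).trans h3)

lemma repeatedEM_zeros (lam : ℝ) (A : List ℕ → Finset ℕ × (ℕ → Multiset ℕ → ℝ))
    (hA : ∀ h, (A h).1.Nonempty) (D : Multiset ℕ) (p : ℝ≥0∞)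
    (hp : ∀ k, expMech lam (A (List.replicate k 0)).1 (hA _)
      (fun c => (A (List.replicate k 0)).2 c D) 0 = p) (L : ℕ) :
    ∀ k, repeatedEM lam A hA L D (List.replicate k 0) (List.replicate (k + L) 0) = p ^ L := by
  induction L with
  | zero => intro k; simp [repeatedEM, PMF.pure_apply]
  | succ n ih =>
    intro k
    rw [repeatedEM, PMF.bind_apply, tsum_eq_single 0, hp]
    · have h1 : List.replicate k 0 ++ [0] = List.replicate (k + 1) 0 := by
        rw [List.replicate_succ']
      rw [h1, show k + (n + 1) = k + 1 + n by ring, ih, pow_succ']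
    · intro c hc
      by_contra h2
      have h3 := repeatedEM_prefix _ _ _ _ _ _ _ (right_ne_zero_of_mul h2)
      have h4 : c ∈ List.replicate (k + (n + 1)) 0 := h3.subset (by simp)
      exact hc (List.eq_of_mem_replicate h4)

lemma badSel_prob (ε₀ : ℝ) (hε₀ : 0 < ε₀) (t : ℝ) (ht : 0 < t) (D : Multiset ℕ) (k : ℕ)
    (hne : (badSel (Real.log t / ε₀) (List.replicate k 0)).1.Nonempty) :
    expMech ε₀ (badSel (Real.log t / ε₀) (List.replicate k 0)).1 hne
      (fun c => (badSel (Real.log t / ε₀) (List.replicate k 0)).2 c D) 0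
      = ENNReal.ofReal (t / (t + (if D = 0 then 1 else Real.exp ε₀))) := by
  have h1 : Real.exp (ε₀ * (Real.log t / ε₀)) = t := by
    rw [mul_div_cancel₀ _ hε₀.ne', Real.exp_log ht]
  have h2 : ∀ a ∈ List.replicate k 0, a = 0 := fun a ha => List.eq_of_mem_replicate ha
  simp only [expMech, PMF.ofFinset_apply, badSel]
  rw [if_pos (by simp), Finset.sum_pair (by norm_num)]
  rw [if_pos rfl, h1, if_neg one_ne_zero, ← ENNReal.ofReal_add ht.le (Real.exp_pos _).le,
    ← ENNReal.ofReal_div_of_pos (by positivity)]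
  by_cases hD : D = 0 <;> simp [hD, h1]

lemma exists_t (ε₀ : ℝ) (L : ℕ) (ε' : ℝ) (hε' : ε' < L * ε₀) :
    ∃ t : ℝ, 0 < t ∧ Real.exp ε' * (t / (t + Real.exp ε₀)) ^ L < (t / (t + 1)) ^ L := by
  have hpos := Real.exp_pos ε₀
  have hc : ContinuousAt (fun t : ℝ => ((t + Real.exp ε₀) / (t + 1)) ^ L) 0 := by
    apply ContinuousAt.pow
    apply ContinuousAt.div (by fun_prop) (by fun_prop) (by norm_num)
  have h0 : Real.exp ε' < ((0 + Real.exp ε₀) / (0 + 1)) ^ L := by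
    rw [zero_add, zero_add, div_one, ← Real.exp_nat_mul]
    exact Real.exp_lt_exp.2 hε'
  have hev := (hc.eventually (lt_mem_nhds h0)).filter_mono
    (nhdsWithin_le_nhds (s := Set.Ioi 0))
  obtain ⟨t, ht, ht0⟩ := (hev.and self_mem_nhdsWithin).exists
  have ht0 : 0 < t := ht0
  refine ⟨t, ht0, ?_⟩
  have hp : 0 < (t / (t + Real.exp ε₀)) ^ L := by positivity
  calc _ < ((t + Real.exp ε₀) / (t + 1)) ^ L * (t / (t + Real.exp ε₀)) ^ L :=
        mul_lt_mul_of_pos_right ht hp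
    _ = _ := by
        rw [← mul_pow]; congr 1; field_simp

/-- for every `ε₀ > 0`, `L`, and `ε' < L·ε₀`, there is an adaptive selector
satisfying monotonicity and bounded realized sensitivity with `Δ = 1` such that
`Repeated-EM_{ε₀, A}` (run for `L` rounds) is not `ε'`-DP. -/
theorem stmt12 (ε₀ : ℝ) (hε₀ : 0 < ε₀) (L : ℕ) (ε' : ℝ) (hε' : ε' < L * ε₀) :
    ∃ (A : List ℕ → Finset ℕ × (ℕ → Multiset ℕ → ℝ)) (hA : ∀ h, (A h).1.Nonempty),
      EMMonotone A ∧ EMBoundedSens A 1 L ∧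
      ¬ PureDP (fun D => repeatedEM (ε₀ / 1) A hA L D []) ε' := by
  obtain ⟨t, ht, hlt⟩ := exists_t ε₀ L ε' hε'
  have hA : ∀ h, (badSel (Real.log t / ε₀) h).1.Nonempty := fun h => ⟨0, by simp [badSel]⟩
  refine ⟨badSel (Real.log t / ε₀), hA, badSel_mono _, badSel_sens _ _, ?_⟩
  intro hDP
  have h := (hDP 0 0 {List.replicate L 0}).2
  rw [PMF.toOuterMeasure_apply_singleton, PMF.toOuterMeasure_apply_singleton, div_one] at h
  have e := fun D => repeatedEM_zeros ε₀ (badSel (Real.log t / ε₀)) hA D _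
    (fun k => badSel_prob ε₀ hε₀ t ht D k (hA _)) L 0
  simp only [List.replicate_zero, zero_add] at e
  rw [e, e, if_pos rfl, if_neg (Multiset.cons_ne_zero), ← ENNReal.ofReal_pow (by positivity),
    ← ENNReal.ofReal_pow (by positivity), ← ENNReal.ofReal_mul (by positivity),
    ENNReal.ofReal_le_ofReal_iff (by positivity)] at h
  exact absurd h (not_le.2 hlt)
end
end

section
/- There is a universal constant C > 0 such that for any 0 < ε, η, β < 1 and any rank-k matroid M = ([m], 𝓘), there exists an ε-add-DP algorithm for 1-decomposable monotone submodular maximization under the matroid constraint M that, on any input dataset D, with probability at least 1 − β outputs a set S* ∈ 𝓘 such that F_D(S*) ≥ (1 − 1/e − η)·max_{S∈𝓘} F_D(S) − C·(k/(η·ε))·log(m/(η·β)). -/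
open scoped ENNReal

noncomputable section

/-- `f` is a monotone submodular set function on `[m]` with values in `[0, 1]`. -/
def IsMonoSubmod {m : ℕ} (f : Finset (Fin m) → ℝ) : Prop :=
  (∀ S T : Finset (Fin m), S ⊆ T → f S ≤ f T) ∧
  (∀ (S T : Finset (Fin m)) (v : Fin m), S ⊆ T →
    f (insert v T) - f T ≤ f (insert v S) - f S) ∧
  (∀ S : Finset (Fin m), 0 ≤ f S ∧ f S ≤ 1)

/-- The decomposable objective `F_D = ∑_{x ∈ D} f_x`. -/
def FD {X : Type*} {m : ℕ} (f : X → Finset (Fin m) → ℝ) (D : Multiset X)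
    (T : Finset (Fin m)) : ℝ :=
  (D.map (fun x => f x T)).sum

/-- A rank-`k` matroid on the ground set `[m]`, given by its independent sets. -/
structure MatroidOn (m k : ℕ) where
  Indep : Finset (Fin m) → Prop
  empty_indep : Indep ∅
  subset_indep : ∀ ⦃S T : Finset (Fin m)⦄, S ⊆ T → Indep T → Indep S
  exchange : ∀ ⦃S T : Finset (Fin m)⦄, Indep S → Indep T → S.card < T.card →
    ∃ e ∈ T, e ∉ S ∧ Indep (insert e S)
  card_le_rank : ∀ ⦃S : Finset (Fin m)⦄, Indep S → S.card ≤ k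
  exists_rank : ∃ S : Finset (Fin m), Indep S ∧ S.card = k

lemma exists_base_superset {m k : ℕ} (Mat : MatroidOn m k) (n : ℕ) :
    ∀ S : Finset (Fin m), Mat.Indep S → k - S.card = n →
      ∃ B, S ⊆ B ∧ Mat.Indep B ∧ B.card = k := by
  induction n with
  | zero =>
    intro S hS hn
    have := Mat.card_le_rank hS
    exact ⟨S, subset_rfl, hS, by omega⟩
  | succ n ih =>
    intro S hS hn
    obtain ⟨B, hB, hBk⟩ := Mat.exists_rank
    obtain ⟨e, _, heS, hi⟩ := Mat.exchange hS hB (by omega)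
    have hc := Finset.card_insert_of_notMem heS
    obtain ⟨B', h1, h2, h3⟩ := ih (insert e S) hi (by omega)
    exact ⟨B', (Finset.subset_insert e S).trans h1, h2, h3⟩

open Classical in
/-- The bases of the matroid. -/
def basesOf {m k : ℕ} (Mat : MatroidOn m k) : Finset (Finset (Fin m)) :=
  Finset.univ.filter (fun T => Mat.Indep T ∧ T.card = k)

lemma mem_basesOf {m k : ℕ} (Mat : MatroidOn m k) (T : Finset (Fin m)) :
    T ∈ basesOf Mat ↔ Mat.Indep T ∧ T.card = k := by
  simp [basesOf]

lemma basesOf_nonempty {m k : ℕ} (Mat : MatroidOn m k) : (basesOf Mat).Nonempty := by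
  obtain ⟨B, h⟩ := Mat.exists_rank
  exact ⟨B, (mem_basesOf Mat B).2 h⟩

lemma card_basesOf_le {m k : ℕ} (Mat : MatroidOn m k) : (basesOf Mat).card ≤ m ^ k := by
  have h : basesOf Mat ⊆ Finset.powersetCard k Finset.univ := by
    intro T hT
    rw [mem_basesOf] at hT
    simp [Finset.mem_powersetCard, hT.2]
  refine (Finset.card_le_card h).trans ?_
  rw [Finset.card_powersetCard]
  simpa using Nat.choose_le_pow m k

/-- Unnormalized weight of the exponential mechanism. -/
def wt {X : Type} {m : ℕ} (f : X → Finset (Fin m) → ℝ) (ε : ℝ)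
    (D : Multiset X) (T : Finset (Fin m)) : ℝ := Real.exp (ε * FD f D T)

open Classical in
/-- Probability assigned by the exponential mechanism. -/
def pr {X : Type} {m k : ℕ} (Mat : MatroidOn m k) (f : X → Finset (Fin m) → ℝ) (ε : ℝ)
    (D : Multiset X) (T : Finset (Fin m)) : ℝ :=
  if T ∈ basesOf Mat then wt f ε D T / ∑ U ∈ basesOf Mat, wt f ε D U else 0

lemma Z_pos {X : Type} {m k : ℕ} (Mat : MatroidOn m k) (f : X → Finset (Fin m) → ℝ) (ε : ℝ)
    (D : Multiset X) : 0 < ∑ U ∈ basesOf Mat, wt f ε D U :=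
  Finset.sum_pos (fun _ _ => Real.exp_pos _) (basesOf_nonempty Mat)

lemma pr_nonneg {X : Type} {m k : ℕ} (Mat : MatroidOn m k) (f : X → Finset (Fin m) → ℝ) (ε : ℝ)
    (D : Multiset X) (T : Finset (Fin m)) : 0 ≤ pr Mat f ε D T := by
  unfold pr
  split_ifs
  · exact div_nonneg (Real.exp_pos _).le (Z_pos Mat f ε D).le
  · exact le_rfl

lemma pr_sum {X : Type} {m k : ℕ} (Mat : MatroidOn m k) (f : X → Finset (Fin m) → ℝ) (ε : ℝ)
    (D : Multiset X) : ∑ T, pr Mat f ε D T = 1 := by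
  unfold pr
  rw [Finset.sum_ite_mem, Finset.univ_inter, ← Finset.sum_div]
  exact div_self (Z_pos Mat f ε D).ne'

/-- The exponential mechanism over bases. -/
def mech {X : Type} {m k : ℕ} (Mat : MatroidOn m k) (f : X → Finset (Fin m) → ℝ) (ε : ℝ)
    (D : Multiset X) : PMF (Finset (Fin m)) :=
  PMF.ofFintype (fun T => ENNReal.ofReal (pr Mat f ε D T)) (by
    rw [← ENNReal.ofReal_sum_of_nonneg (fun T _ => pr_nonneg Mat f ε D T), pr_sum]
    simp)

open Classical in
lemma mech_apply {X : Type} {m k : ℕ} (Mat : MatroidOn m k) (f : X → Finset (Fin m) → ℝ) (ε : ℝ)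
    (D : Multiset X) (S : Set (Finset (Fin m))) :
    (mech Mat f ε D).toOuterMeasure S =
      ENNReal.ofReal (∑ T ∈ Finset.univ.filter (· ∈ S), pr Mat f ε D T) := by
  rw [PMF.toOuterMeasure_apply_fintype,
    ENNReal.ofReal_sum_of_nonneg (fun T _ => pr_nonneg Mat f ε D T), Finset.sum_filter]
  refine Finset.sum_congr rfl fun T _ => ?_
  simp [Set.indicator_apply, mech]

lemma pr_cons_le {X : Type} {m k : ℕ} (Mat : MatroidOn m k) (f : X → Finset (Fin m) → ℝ)
    (hf : ∀ x, IsMonoSubmod (f x)) (ε : ℝ) (hε : 0 < ε)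
    (D : Multiset X) (x : X) (T : Finset (Fin m)) :
    pr Mat f ε (x ::ₘ D) T ≤ Real.exp ε * pr Mat f ε D T := by
  unfold pr
  split_ifs
  · have hFD : ∀ U, FD f (x ::ₘ D) U = f x U + FD f D U := by
      intro U; simp [FD]
    have h1 : wt f ε (x ::ₘ D) T ≤ Real.exp ε * wt f ε D T := by
      unfold wt
      rw [← Real.exp_add, hFD]
      apply Real.exp_le_exp.2
      nlinarith [((hf x).2.2 T).2]
    have h2 : ∑ U ∈ basesOf Mat, wt f ε D U ≤ ∑ U ∈ basesOf Mat, wt f ε (x ::ₘ D) U := by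
      refine Finset.sum_le_sum fun U _ => ?_
      unfold wt
      rw [hFD]
      apply Real.exp_le_exp.2
      nlinarith [((hf x).2.2 U).1]
    rw [← mul_div_assoc]
    exact div_le_div₀ (mul_nonneg (Real.exp_pos _).le (Real.exp_pos _).le) h1 (Z_pos Mat f ε D) h2
  · simp

lemma mech_dp {X : Type} {m k : ℕ} (Mat : MatroidOn m k) (f : X → Finset (Fin m) → ℝ)
    (hf : ∀ x, IsMonoSubmod (f x)) (ε : ℝ) (hε : 0 < ε) : AddDP (mech Mat f ε) ε := by
  intro D x S
  rw [mech_apply, mech_apply, ← ENNReal.ofReal_mul (Real.exp_pos _).le, Finset.mul_sum]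
  exact ENNReal.ofReal_le_ofReal (Finset.sum_le_sum fun T _ => pr_cons_le Mat f hf ε hε D x T)

lemma FD_nonneg {X : Type} {m : ℕ} (f : X → Finset (Fin m) → ℝ)
    (hf : ∀ x, IsMonoSubmod (f x)) (D : Multiset X) (S : Finset (Fin m)) : 0 ≤ FD f D S := by
  unfold FD
  apply Multiset.sum_nonneg
  intro y hy
  obtain ⟨x, _, rfl⟩ := Multiset.mem_map.1 hy
  exact ((hf x).2.2 S).1

lemma FD_mono {X : Type} {m : ℕ} (f : X → Finset (Fin m) → ℝ)
    (hf : ∀ x, IsMonoSubmod (f x)) (D : Multiset X) {S T : Finset (Fin m)} (h : S ⊆ T) :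
    FD f D S ≤ FD f D T :=
  Multiset.sum_map_le_sum_map _ _ fun x _ => (hf x).1 S T h

lemma pr_bad {X : Type} {m k : ℕ} (Mat : MatroidOn m k) (f : X → Finset (Fin m) → ℝ)
    (ε β : ℝ) (hε : 0 < ε) (hβ : 0 < β) (hβ1 : β < 1) (hk : k ≠ 0)
    (D : Multiset X) (B T : Finset (Fin m)) (hB : B ∈ basesOf Mat)
    (hT : FD f D T < FD f D B - k / ε * Real.log (m / β)) :
    pr Mat f ε D T ≤ if T ∈ basesOf Mat then β / (m : ℝ) ^ k else 0 := by
  unfold pr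
  split_ifs with hTB
  · have hm : (0 : ℝ) < m := by
      rcases Nat.eq_zero_or_pos m with rfl | h
      · have h2 := ((mem_basesOf Mat B).1 hB).2
        have h3 := Finset.card_le_univ B
        simp at h3
        subst h3
        simp at h2
        omega
      · exact_mod_cast h
    have hZ : wt f ε D B ≤ ∑ U ∈ basesOf Mat, wt f ε D U :=
      Finset.single_le_sum (f := fun U => wt f ε D U) (fun _ _ => (Real.exp_pos _).le) hB
    have h1 : wt f ε D T ≤ (β / m) ^ k * wt f ε D B := by
      have : (β / m) ^ k = Real.exp (- (k * Real.log (m / β))) := by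
        rw [← mul_neg, Real.exp_nat_mul, ← Real.log_inv, Real.exp_log (by positivity), inv_div]
      rw [this]
      unfold wt
      rw [← Real.exp_add]
      apply Real.exp_le_exp.2
      have := mul_le_mul_of_nonneg_left hT.le hε.le
      have h4 : ε * (k / ε * Real.log (m / β)) = k * Real.log (m / β) := by
        field_simp
      rw [mul_sub, h4] at this
      linarith
    have h2 : (β / m) ^ k ≤ β / (m : ℝ) ^ k := by
      rw [div_pow]
      gcongr
      exact pow_le_of_le_one hβ.le hβ1.le hk
    rw [div_le_iff₀ (Z_pos Mat f ε D)]
    refine h1.trans (mul_le_mul h2 hZ (Real.exp_pos _).le (by positivity))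
  · exact le_rfl

/-- an `ε`-add-DP algorithm for 1-decomposable monotone submodular
maximization under a rank-`k` matroid constraint, outputting an independent set `S*` with
`F_D S* ≥ (1 - 1/e - η)·OPT − C·(k/(ηε))·log(m/(ηβ))` with probability `1 - β`. -/
theorem stmt14 :
    ∃ C : ℝ, 0 < C ∧
      ∀ (ε η β : ℝ), 0 < ε → ε < 1 → 0 < η → η < 1 → 0 < β → β < 1 →
      ∀ (m k : ℕ) (Mat : MatroidOn m k),
      ∀ (X : Type) (f : X → Finset (Fin m) → ℝ), (∀ x : X, IsMonoSubmod (f x)) →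
      ∃ M : Multiset X → PMF (Finset (Fin m)),
        AddDP M ε ∧
        ∀ D : Multiset X,
          ENNReal.ofReal (1 - β) ≤
            (M D).toOuterMeasure
              {T : Finset (Fin m) | Mat.Indep T ∧
                ∀ S : Finset (Fin m), Mat.Indep S →
                  (1 - 1 / Real.exp 1 - η) * FD f D S -
                      C * (k / (η * ε)) * Real.log (m / (η * β)) ≤ FD f D T} := by
  refine ⟨1, one_pos, ?_⟩
  intro ε η β hε hε1 hη hη1 hβ hβ1 m k Mat X f hf
  refine ⟨mech Mat f ε, mech_dp Mat f hf ε hε, ?_⟩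
  intro D
  classical
  obtain ⟨B, hB, hmax⟩ := (basesOf Mat).exists_max_image (FD f D) (basesOf_nonempty Mat)
  set t : ℝ := k / ε * Real.log (m / β) with ht
  generalize hG : {T : Finset (Fin m) | Mat.Indep T ∧
          ∀ S : Finset (Fin m), Mat.Indep S →
          (1 - 1 / Real.exp 1 - η) * FD f D S -
            1 * (k / (η * ε)) * Real.log (m / (η * β)) ≤ FD f D T} = G
  rw [mech_apply]
  apply ENNReal.ofReal_le_ofReal
  -- it suffices to bound the bad part
  have hkey : ∀ T, Mat.Indep T → FD f D B - t ≤ FD f D T → ∀ S : Finset (Fin m), Mat.Indep S →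
      (1 - 1 / Real.exp 1 - η) * FD f D S -
        1 * (k / (η * ε)) * Real.log (m / (η * β)) ≤ FD f D T := by
    intro T hT hBT S hS
    obtain ⟨B', hSB, hB'i, hB'k⟩ := exists_base_superset Mat _ S hS rfl
    have h1 := FD_mono f hf D hSB
    have h2 := hmax B' ((mem_basesOf Mat B').2 ⟨hB'i, hB'k⟩)
    have h0 := FD_nonneg f hf D S
    have h3 : (1 - 1 / Real.exp 1 - η) * FD f D S ≤ FD f D S := by
      have : 0 < 1 / Real.exp 1 := by positivity
      nlinarith
    have h4 : t ≤ 1 * (k / (η * ε)) * Real.log (m / (η * β)) := by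
      rcases Nat.eq_zero_or_pos k with rfl | hk
      · simp [ht]
      · have hm : 1 ≤ m := by
          have := Finset.card_le_univ B'
          simp at this
          omega
        have hm' : (1 : ℝ) ≤ m := by exact_mod_cast hm
        rw [ht, one_mul]
        have hηβ : η * β ≤ β := by nlinarith
        have hηε : η * ε ≤ ε := by nlinarith
        have : 0 ≤ Real.log (m / β) := Real.log_nonneg (by rw [le_div_iff₀ hβ]; linarith)
        gcongr
    linarith
  rcases Nat.eq_zero_or_pos k with hk0 | hk
  · -- everything in the support is good
    have : ∑ T ∈ Finset.univ.filter (· ∈ G), pr Mat f ε D T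
        = ∑ T, pr Mat f ε D T := by
      refine Finset.sum_subset (Finset.filter_subset _ _) ?_
      intro T _ hT
      by_contra hne
      have hTB : T ∈ basesOf Mat := by
        by_contra h
        exact hne (by simp [pr, h])
      have hTb := (mem_basesOf Mat T).1 hTB
      have hBb := (mem_basesOf Mat B).1 hB
      have e1 : T = ∅ := Finset.card_eq_zero.1 (by omega)
      have e2 : B = ∅ := Finset.card_eq_zero.1 (by omega)
      apply hT
      rw [Finset.mem_filter, ← hG]
      refine ⟨Finset.mem_univ _, hTb.1, hkey T hTb.1 ?_⟩
      rw [e1, e2, ht, hk0]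
      simp
    rw [this, pr_sum]
    linarith
  · have hsplit := Finset.sum_filter_add_sum_filter_not Finset.univ
      (· ∈ G) (pr Mat f ε D)
    rw [pr_sum] at hsplit
    have hbad : ∑ T ∈ Finset.univ.filter (fun T => ¬ (T ∈ G)), pr Mat f ε D T ≤ β := by
      calc _ ≤ ∑ T ∈ Finset.univ.filter (fun T => ¬ (T ∈ G)),
              (if T ∈ basesOf Mat then β / (m : ℝ) ^ k else 0) := by
            refine Finset.sum_le_sum fun T hT => ?_
            by_cases hTB : T ∈ basesOf Mat
            · refine (pr_bad Mat f ε β hε hβ hβ1 hk.ne' D B T hB ?_).trans_eq (by congr)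
              by_contra hcon
              have hTb := (mem_basesOf Mat T).1 hTB
              refine (Finset.mem_filter.1 hT).2 ?_
              rw [← hG]
              exact ⟨hTb.1, hkey T hTb.1 (not_lt.1 hcon)⟩
            · simp [pr, hTB]
        _ ≤ ∑ T : Finset (Fin m), (if T ∈ basesOf Mat then β / (m : ℝ) ^ k else 0) := by
            refine Finset.sum_le_sum_of_subset_of_nonneg (Finset.filter_subset _ _) ?_
            intro T _ _
            split_ifs <;> positivity
        _ = (basesOf Mat).card * (β / (m : ℝ) ^ k) := by
            rw [Finset.sum_ite_mem, Finset.univ_inter, Finset.sum_const, nsmul_eq_mul]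
        _ ≤ β := by
            have hc : ((basesOf Mat).card : ℝ) ≤ (m : ℝ) ^ k := by
              exact_mod_cast card_basesOf_le Mat
            have hp : (0 : ℝ) < (basesOf Mat).card := by
              exact_mod_cast (basesOf_nonempty Mat).card_pos
            have hmk : (0 : ℝ) < (m : ℝ) ^ k := hp.trans_le hc
            rw [← mul_div_assoc, div_le_iff₀ hmk, mul_comm]
            exact mul_le_mul_of_nonneg_left hc hβ.le
    linarith
end
end
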